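/- Under the causal model G1, fix 2 ≤ t ≤ t+k ≤ T and intervention values x*_{t:t+k}. Let C range over configurations c = (v_{t:t+k}, w_{t:t+k}, z_{t−1}, S_{t−1}). Assuming that P(x_{t:t+k} = x*_{t:t+k}, c) > 0 for every configuration c with P(c) > 0, the interventional joint distribution of (y_{t+k}, z_{t+k}) satisfies, for every pair of values (y, z): P(y_{t+k} = y, z_{t+k} = z | do(x_{t:t+k} = x*_{t:t+k})) = Σ_c P(y_{t+k} = y, z_{t+k} = z | x_{t:t+k} = x*_{t:t+k}, c) P(c) = Σ_c [ Σ_{y_{t:t+k−1}, z_{t:t+k−1}} ∏_{j=t}^{t+k} b_j(y_j | z_j, x*_j, v_j, y_{j−1}) a_j(z_j | x*_j, w_j, z_{j−1}, y_{j−1}) ] P(c), where in the inner sum y_{t+k} = y and z_{t+k} = z are held fixed. -/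

import Mathlib

open Finset

/-- A trajectory of the six processes (u, x, v, w, z, y) over times 1..T; index 0 of
`Fin (T+1)` is a dummy time whose value is pinned to `default` by the joint pmf. -/
structure Traj (U X V W Z Y : Type) (T : ℕ) where
  u : Fin (T + 1) → U
  x : Fin (T + 1) → X
  v : Fin (T + 1) → V
  w : Fin (T + 1) → W
  z : Fin (T + 1) → Z
  y : Fin (T + 1) → Y

/-- Trajectories are equivalent to a finite product of function types. -/
def trajEquiv (U X V W Z Y : Type) (T : ℕ) :
    Traj U X V W Z Y T ≃
      (Fin (T + 1) → U) × (Fin (T + 1) → X) × (Fin (T + 1) → V) × (Fin (T + 1) → W) ×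
        (Fin (T + 1) → Z) × (Fin (T + 1) → Y) where
  toFun τ := (τ.u, τ.x, τ.v, τ.w, τ.z, τ.y)
  invFun p := ⟨p.1, p.2.1, p.2.2.1, p.2.2.2.1, p.2.2.2.2.1, p.2.2.2.2.2⟩
  left_inv τ := rfl
  right_inv p := rfl

instance {U X V W Z Y : Type} {T : ℕ}
    [Fintype U] [Fintype X] [Fintype V] [Fintype W] [Fintype Z] [Fintype Y]
    [DecidableEq U] [DecidableEq X] [DecidableEq V] [DecidableEq W] [DecidableEq Z]
    [DecidableEq Y] : Fintype (Traj U X V W Z Y T) :=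
  Fintype.ofEquiv _ (trajEquiv U X V W Z Y T).symm

instance {U X V W Z Y : Type} {T : ℕ}
    [DecidableEq U] [DecidableEq X] [DecidableEq V] [DecidableEq W] [DecidableEq Z]
    [DecidableEq Y] : DecidableEq (Traj U X V W Z Y T) := fun a b =>
  decidable_of_iff
    (a.u = b.u ∧ a.x = b.x ∧ a.v = b.v ∧ a.w = b.w ∧ a.z = b.z ∧ a.y = b.y)
    (by cases a; cases b; simp)

/-- Time index t as an element of `Fin (T+1)` (defined for all naturals via truncation;
only used for t ≤ T). -/
def idx (T t : ℕ) : Fin (T + 1) := ⟨min t T, Nat.lt_succ_of_le (min_le_right t T)⟩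

open Classical in
/-- Probability of an event under a pmf on a finite type. -/
noncomputable def pr {α : Type*} [Fintype α] (p : α → ℝ) (E : α → Prop) : ℝ :=
  ∑ a, if E a then p a else 0

/-- Conditional probability P(E | F) = P(E ∧ F) / P(F). -/
noncomputable def cpr {α : Type*} [Fintype α] (p : α → ℝ) (E F : α → Prop) : ℝ :=
  pr p (fun a => E a ∧ F a) / pr p F

variable {U X V W Z Y : Type}
  [Fintype U] [Fintype X] [Fintype V] [Fintype W] [Fintype Z] [Fintype Y]
  [DecidableEq U] [DecidableEq X] [DecidableEq V] [DecidableEq W] [DecidableEq Z] [DecidableEq Y]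
  [Inhabited U] [Inhabited X] [Inhabited V] [Inhabited W] [Inhabited Z] [Inhabited Y]

/-- Joint pmf of the causal model G1:
P = q_1(u_1) ∏_{t=2}^T q_u(u_t|u_{t-1}) ∏_{t=1}^T q_x(x_t|u_t) q_v(v_t|u_t) q_w(w_t|u_t)
  · a_1(z_1|x_1,w_1) b_1(y_1|z_1,x_1,v_1)
  · ∏_{t=2}^T a_t(z_t|x_t,w_t,z_{t-1},y_{t-1}) b_t(y_t|z_t,x_t,v_t,y_{t-1});
the dummy time-0 coordinates are pinned to `default` so that this is a pmf. -/
noncomputable def jointG1 (T : ℕ)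
    (q1 : U → ℝ) (qu : U → U → ℝ) (qx : X → U → ℝ) (qv : V → U → ℝ) (qw : W → U → ℝ)
    (a1 : Z → X → W → ℝ) (b1 : Y → Z → X → V → ℝ)
    (a : ℕ → Z → X → W → Z → Y → ℝ) (b : ℕ → Y → Z → X → V → Y → ℝ)
    (τ : Traj U X V W Z Y T) : ℝ :=
  (if τ.u (idx T 0) = default ∧ τ.x (idx T 0) = default ∧ τ.v (idx T 0) = default ∧
      τ.w (idx T 0) = default ∧ τ.z (idx T 0) = default ∧ τ.y (idx T 0) = default
    then 1 else 0) *
  (q1 (τ.u (idx T 1)) * ∏ j ∈ Finset.Icc 2 T, qu (τ.u (idx T j)) (τ.u (idx T (j - 1)))) *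
  (∏ j ∈ Finset.Icc 1 T,
    (qx (τ.x (idx T j)) (τ.u (idx T j)) * qv (τ.v (idx T j)) (τ.u (idx T j)) *
      qw (τ.w (idx T j)) (τ.u (idx T j)))) *
  (a1 (τ.z (idx T 1)) (τ.x (idx T 1)) (τ.w (idx T 1)) *
    b1 (τ.y (idx T 1)) (τ.z (idx T 1)) (τ.x (idx T 1)) (τ.v (idx T 1)) *
    ∏ j ∈ Finset.Icc 2 T,
      (a j (τ.z (idx T j)) (τ.x (idx T j)) (τ.w (idx T j)) (τ.z (idx T (j - 1)))
          (τ.y (idx T (j - 1))) *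
        b j (τ.y (idx T j)) (τ.z (idx T j)) (τ.x (idx T j)) (τ.v (idx T j))
          (τ.y (idx T (j - 1)))))

/-- Interventional pmf of G1 under do(x_j = xs j) for j ∈ J: the truncated factorization,
with the factors q_x(x_j | u_j), j ∈ J, deleted and x_j fixed to xs j. -/
noncomputable def doxG1 (T : ℕ) (J : Finset ℕ) (xs : ℕ → X)
    (q1 : U → ℝ) (qu : U → U → ℝ) (qx : X → U → ℝ) (qv : V → U → ℝ) (qw : W → U → ℝ)
    (a1 : Z → X → W → ℝ) (b1 : Y → Z → X → V → ℝ)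
    (a : ℕ → Z → X → W → Z → Y → ℝ) (b : ℕ → Y → Z → X → V → Y → ℝ)
    (τ : Traj U X V W Z Y T) : ℝ :=
  (if τ.u (idx T 0) = default ∧ τ.x (idx T 0) = default ∧ τ.v (idx T 0) = default ∧
      τ.w (idx T 0) = default ∧ τ.z (idx T 0) = default ∧ τ.y (idx T 0) = default
    then 1 else 0) *
  (q1 (τ.u (idx T 1)) * ∏ j ∈ Finset.Icc 2 T, qu (τ.u (idx T j)) (τ.u (idx T (j - 1)))) *
  (∏ j ∈ Finset.Icc 1 T,
    ((if j ∈ J then (if τ.x (idx T j) = xs j then 1 else 0)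
      else qx (τ.x (idx T j)) (τ.u (idx T j))) *
      qv (τ.v (idx T j)) (τ.u (idx T j)) * qw (τ.w (idx T j)) (τ.u (idx T j)))) *
  (a1 (τ.z (idx T 1)) (τ.x (idx T 1)) (τ.w (idx T 1)) *
    b1 (τ.y (idx T 1)) (τ.z (idx T 1)) (τ.x (idx T 1)) (τ.v (idx T 1)) *
    ∏ j ∈ Finset.Icc 2 T,
      (a j (τ.z (idx T j)) (τ.x (idx T j)) (τ.w (idx T j)) (τ.z (idx T (j - 1)))
          (τ.y (idx T (j - 1))) *
        b j (τ.y (idx T j)) (τ.z (idx T j)) (τ.x (idx T j)) (τ.v (idx T j))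
          (τ.y (idx T (j - 1)))))

/-- The event that the trajectory agrees with the given past values
S_{t-1} = (y_{1:t-1}, x_{1:t-1}, v_{1:t-1}, w_{1:t-1}); histories are indexed by `Fin t`
with index j standing for time j (index 0 being the pinned dummy time). -/
def histEv (T t : ℕ) (τ : Traj U X V W Z Y T)
    (hy : Fin t → Y) (hx : Fin t → X) (hv : Fin t → V) (hw : Fin t → W) : Prop :=
  (∀ j : Fin t, τ.y (idx T j.val) = hy j) ∧ (∀ j : Fin t, τ.x (idx T j.val) = hx j) ∧
    (∀ j : Fin t, τ.v (idx T j.val) = hv j) ∧ (∀ j : Fin t, τ.w (idx T j.val) = hw j)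

/-- Extend a tuple g of intermediate values (index i of `Fin k` is time t+i, for a block
of times t..t+k) by a fixed value `last` at the final index. -/
def extWith {β : Type*} (k : ℕ) (g : Fin k → β) (last : β) (i : Fin (k + 1)) : β :=
  if h : i.val < k then g ⟨i.val, h⟩ else last

/-- The "previous value" map for a block of times t..t+k: at the first index it is
`first` (the value at time t-1), and at index i ≥ 1 it is g (i-1). -/
def shiftFirst {β : Type*} (k : ℕ) (first : β) (g : Fin k → β) (i : Fin (k + 1)) : β :=
  if h : i.val = 0 then first else g ⟨i.val - 1, by have := i.isLt; omega⟩

/-!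
Given the drivers `u`, `v`, `w`, the states `(x_j, z_j, y_j)` form a Markov chain with transition
weights `q_x a_j b_j`. Three facts follow.
* Intervening on `x_{t:t+k}` does not change expectations of functions of the drivers and of the
  states before time `t`, because both chains have transition weights summing to one from time `t`
  on. In particular it does not change the law of the configuration `c`.
* Under the intervention, the conditional probability of the outcome at time `t + k` given the
  drivers and the states before time `t` is a sum over paths of products of `a_j` and `b_j`, which
  depends on `c` alone.
* On the event `x_{t:t+k} = x*_{t:t+k}`, the observational law is the interventional law times the
  likelihood ratio `∏ j, q_x(x*_j | u_j)`. The ratio is a function of the drivers, so it leaves the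
  conditional probability of the outcome given the event and `c` equal to the one in the second
  fact.
-/

section Tuples

variable {β γ R : Type*}

theorem extWith_eq_snoc {k : ℕ} (g : Fin k → β) (b : β) :
    extWith k g b = (Fin.snoc g b : Fin (k + 1) → β) := by
  funext i
  refine Fin.lastCases ?_ (fun j => ?_) i <;> simp [extWith]

theorem shiftFirst_eq_cons {k : ℕ} (b : β) (g : Fin k → β) :
    shiftFirst k b g = (Fin.cons b g : Fin (k + 1) → β) := by
  funext i
  refine Fin.cases ?_ (fun j => ?_) i <;> simp [shiftFirst]

theorem cons_snoc_castSucc {k : ℕ} (b : β) (g : Fin k → β) (c : β) (i : Fin (k + 1)) :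
    (Fin.cons b (Fin.snoc g c : Fin (k + 1) → β) : Fin (k + 2) → β) i.castSucc =
      (Fin.cons b g : Fin (k + 1) → β) i := by
  rw [Fin.cons_snoc_eq_snoc_cons, Fin.snoc_castSucc]

theorem map_cons_apply (f : β → γ) {k : ℕ} (b : β) (g : Fin k → β) (i : Fin (k + 1)) :
    f ((Fin.cons b g : Fin (k + 1) → β) i) =
      (Fin.cons (f b) (fun j => f (g j)) : Fin (k + 1) → γ) i :=
  congrFun (Fin.comp_cons f b g) i

theorem map_snoc_apply (f : β → γ) {k : ℕ} (g : Fin k → β) (b : β) (i : Fin (k + 1)) :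
    f ((Fin.snoc g b : Fin (k + 1) → β) i) =
      (Fin.snoc (fun j => f (g j)) (f b) : Fin (k + 1) → γ) i :=
  congrFun (Fin.comp_snoc f g b) i

theorem sum_fin_succ_eq_sum_snoc [Fintype β] [AddCommMonoid R] {k : ℕ}
    (F : (Fin (k + 1) → β) → R) :
    ∑ g, F g = ∑ g : Fin k → β, ∑ b, F (Fin.snoc g b) := by
  rw [← (Fin.snocEquiv fun _ : Fin (k + 1) => β).sum_comp F, Fintype.sum_prod_type_right]
  rfl

theorem sum_fin_succ_mul_ite_last [Fintype β] [DecidableEq β] [NonAssocSemiring R] {k : ℕ}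
    (F : (Fin (k + 1) → β) → R) (b : β) :
    ∑ g, F g * (if g (Fin.last k) = b then 1 else 0) = ∑ g : Fin k → β, F (Fin.snoc g b) := by
  simp [sum_fin_succ_eq_sum_snoc]

theorem sum_fun_prod [Fintype β] [Fintype γ] [AddCommMonoid R] {ι : Type*} [Fintype ι]
    [DecidableEq ι] (F : (ι → β × γ) → R) :
    ∑ g, F g = ∑ b : ι → β, ∑ c : ι → γ, F fun i => (b i, c i) := by
  rw [← (Equiv.arrowProdEquivProdArrow ι (fun _ => β) fun _ => γ).symm.sum_comp F,
    Fintype.sum_prod_type]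
  rfl

theorem sum_fun_prod_prod_ite_mul [Fintype β] [DecidableEq β] [Fintype γ] [CommSemiring R]
    {ι : Type*} [Fintype ι] [DecidableEq ι] (b : ι → β) (F : (ι → β × γ) → R) :
    ∑ g, (∏ i, if (g i).1 = b i then (1 : R) else 0) * F g =
      ∑ c : ι → γ, F fun i => (b i, c i) := by
  rw [sum_fun_prod, Finset.sum_comm]
  simp [Finset.prod_ite_zero, ← funext_iff]

end Tuples

section PathWeight

variable {S R : Type*} [CommSemiring R]

/-- The weight of the path `g` at times `t, t + 1, …` of the Markov chain that is in state `s` at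
time `t - 1`. Here `K j s' s` is the weight of the transition from `s` to `s'` at time `j`. -/
def pathWeight (K : ℕ → S → S → R) (t : ℕ) (s : S) {n : ℕ} (g : Fin n → S) : R :=
  ∏ i : Fin n, K (t + i) (g i) ((Fin.cons s g : Fin (n + 1) → S) i.castSucc)

theorem pathWeight_snoc (K : ℕ → S → S → R) (t : ℕ) (s : S) {n : ℕ} (g : Fin n → S) (s' : S) :
    pathWeight K t s (Fin.snoc g s' : Fin (n + 1) → S) =
      pathWeight K t s g * K (t + n) s' ((Fin.cons s g : Fin (n + 1) → S) (Fin.last n)) := by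
  simp only [pathWeight, cons_snoc_castSucc, Fin.prod_univ_castSucc (n := n), Fin.snoc_castSucc,
    Fin.snoc_last, Fin.val_castSucc, Fin.val_last]

theorem prod_Ico_eq_pathWeight (K : ℕ → S → S → R) (t n : ℕ) (r : ℕ → S) :
    ∏ j ∈ Finset.Ico t (t + n), K j (r j) (r (j - 1)) =
      pathWeight K t (r (t - 1)) fun i : Fin n => r (t + i) := by
  rw [Finset.prod_Ico_eq_prod_range, Nat.add_sub_cancel_left, Finset.prod_range, pathWeight]
  refine Finset.prod_congr rfl fun i _ => ?_
  congr 1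
  cases n with
  | zero => exact i.elim0
  | succ n =>
    refine Fin.cases ?_ (fun i => ?_) i <;> simp

variable [Fintype S]

theorem sum_pathWeight_mul_take {K : ℕ → S → S → R} {t m n : ℕ} (hmn : m ≤ n)
    (hK : ∀ j, t ≤ j → j < t + n → ∀ s, ∑ s', K j s' s = 1) (s : S) (F : (Fin m → S) → R) :
    ∑ g : Fin n → S, pathWeight K t s g * F (Fin.take m hmn g) =
      ∑ g : Fin m → S, pathWeight K t s g * F g := by
  induction n, hmn using Nat.le_induction with
  | base => rfl
  | succ n hmn ih =>
    rw [← ih fun j hj hj' => hK j hj (by lia), sum_fin_succ_eq_sum_snoc]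
    refine Finset.sum_congr rfl fun g _ => ?_
    have htake (s' : S) : Fin.take m (hmn.trans n.le_succ) (Fin.snoc g s' : Fin (n + 1) → S) =
        Fin.take m hmn g := by
      rw [← Fin.take_init m hmn, Fin.init_snoc]
    simp only [htake, pathWeight_snoc, ← Finset.sum_mul, ← Finset.mul_sum]
    rw [hK (t + n) (by lia) (by lia), mul_one]

theorem sum_pathWeight {K : ℕ → S → S → R} {t n : ℕ}
    (hK : ∀ j, t ≤ j → j < t + n → ∀ s, ∑ s', K j s' s = 1) (s : S) :
    ∑ g : Fin n → S, pathWeight K t s g = 1 := by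
  simpa [pathWeight] using sum_pathWeight_mul_take n.zero_le hK s fun _ => 1

end PathWeight

theorem sum_tail_congr {S R : Type*} [Fintype S] [AddCommMonoid R] {T t n : ℕ} (hT : t + n = T)
    {H H' : (Fin (T + 1) → S) → (Fin (n + 1) → S) → R}
    (hH : ∀ g, DependsOn (H · g) {i | i.val < t}) (hH' : ∀ g, DependsOn (H' · g) {i | i.val < t})
    (h : ∀ r, ∑ g, H r g = ∑ g, H' r g) :
    ∑ r, H r (fun i => r (idx T (t + i))) = ∑ r, H' r (fun i => r (idx T (t + i))) := by
  subst hT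
  let join (p : Fin t → S) (g : Fin (n + 1) → S) : Fin (t + n + 1) → S :=
    (Fin.append p g : Fin (t + (n + 1)) → S)
  have hsum (G : (Fin (t + n + 1) → S) → R) : ∑ r, G r = ∑ p, ∑ g, G (join p g) := by
    rw [← Fintype.sum_prod_type']
    exact ((Fin.appendEquiv t (n + 1)).sum_comp G).symm
  have htail (p g) : (fun i : Fin (n + 1) => join p g (idx (t + n) (t + i))) = g := by
    funext i
    have hi : idx (t + n) (t + i) = Fin.natAdd t i := Fin.ext (min_eq_left (by lia))
    exact (congrArg (join p g) hi).trans (Fin.append_right p g i)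
  have hconst (p g g') (i : Fin (t + n + 1)) (hi : i.val < t) : join p g i = join p g' i :=
    (Fin.append_left p g ⟨i, hi⟩).trans (Fin.append_left p g' ⟨i, hi⟩).symm
  rw [hsum, hsum]
  refine Finset.sum_congr rfl fun p _ => ?_
  simp only [htail]
  rcases isEmpty_or_nonempty (Fin (n + 1) → S) with hS | ⟨⟨g₀⟩⟩
  · simp only [Finset.univ_eq_empty, Finset.sum_empty]
  · rw [Finset.sum_congr rfl fun g _ => hH g (hconst p g g₀), h,
      Finset.sum_congr rfl fun g _ => hH' g (hconst p g g₀)]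

section Probability

variable {α γ : Type*} [Fintype α] {p : α → ℝ}

open Classical in
theorem pr_eq_sum_mul_ite (p : α → ℝ) (E : α → Prop) :
    pr p E = ∑ a, p a * (if E a then 1 else 0) := by
  simp only [pr, mul_boole]

theorem pr_nonneg (hp : ∀ a, 0 ≤ p a) (E : α → Prop) : 0 ≤ pr p E :=
  Finset.sum_nonneg fun a _ => by split_ifs; exacts [hp a, le_rfl]

theorem sum_mul_pr_eq [Fintype γ] (p : α → ℝ) (C : α → γ) (f : γ → ℝ) :
    ∑ c, f c * pr p (fun a => C a = c) = ∑ a, p a * f (C a) := by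
  classical
  simp only [pr_eq_sum_mul_ite, Finset.mul_sum]
  rw [Finset.sum_comm]
  simp [mul_comm]

theorem cpr_mul_pr_of_pr_and_eq (hp : ∀ a, 0 ≤ p a) {E F G : α → Prop} {r : ℝ}
    (hr : pr p (fun a => E a ∧ F a) = r * pr p F) (hpos : 0 < pr p G → 0 < pr p F) :
    cpr p E F * pr p G = r * pr p G := by
  rcases (pr_nonneg hp G).eq_or_lt with hG | hG
  · rw [← hG, mul_zero, mul_zero]
  · rw [cpr, hr, mul_div_cancel_right₀ _ (hpos hG).ne']

end Probability

/-- The values of a configuration `c = (v_{t:t+k}, w_{t:t+k}, z_{t-1}, S_{t-1})`, the history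
`S_{t-1}` being listed in the order `y`, `x`, `v`, `w`. -/
abbrev Config (X V W Z Y : Type) (t k : ℕ) : Type :=
  (Fin (k + 1) → V) × (Fin (k + 1) → W) × Z ×
    (Fin t → Y) × (Fin t → X) × (Fin t → V) × (Fin t → W)

namespace Traj

variable {U X V W Z Y : Type} {T : ℕ}

/-- The state `(x_j, z_j, y_j)` of a trajectory at time `j`. -/
def state (τ : Traj U X V W Z Y T) (j : ℕ) : X × Z × Y :=
  (τ.x (idx T j), τ.z (idx T j), τ.y (idx T j))

/-- A function of trajectories that, apart from the drivers `u`, `v`, `w` at all times, involves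
only the states before time `t`. -/
def DependsOnHistory {β : Type*} (t : ℕ) (f : Traj U X V W Z Y T → β) : Prop :=
  ∀ ⦃τ τ'⦄, τ.u = τ'.u → τ.v = τ'.v → τ.w = τ'.w → (∀ j < t, τ.state j = τ'.state j) → f τ = f τ'

theorem DependsOnHistory.mul {R : Type*} [Mul R] {t : ℕ} {f g : Traj U X V W Z Y T → R}
    (hf : DependsOnHistory t f) (hg : DependsOnHistory t g) :
    DependsOnHistory t fun τ => f τ * g τ :=
  fun _ _ hu hv hw hs => congrArg₂ (· * ·) (hf hu hv hw hs) (hg hu hv hw hs)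

theorem DependsOnHistory.comp {β γ : Type*} {t : ℕ} {f : Traj U X V W Z Y T → β}
    (hf : DependsOnHistory t f) (φ : β → γ) : DependsOnHistory t fun τ => φ (f τ) :=
  fun _ _ hu hv hw hs => congrArg φ (hf hu hv hw hs)

theorem sum_congr_of_dependsOnHistory {R : Type*} [AddCommMonoid R]
    [Fintype U] [Fintype X] [Fintype V] [Fintype W] [Fintype Z] [Fintype Y]
    [DecidableEq U] [DecidableEq X] [DecidableEq V] [DecidableEq W] [DecidableEq Z] [DecidableEq Y]
    {t n : ℕ} (hT : t + n = T) {F F' : Traj U X V W Z Y T → (Fin (n + 1) → X × Z × Y) → R}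
    (hF : ∀ g, DependsOnHistory t (F · g)) (hF' : ∀ g, DependsOnHistory t (F' · g))
    (h : ∀ τ, ∑ g, F τ g = ∑ g, F' τ g) :
    ∑ τ, F τ (fun i => τ.state (t + i)) = ∑ τ, F' τ (fun i => τ.state (t + i)) := by
  let ofStates (u : Fin (T + 1) → U) (v : Fin (T + 1) → V) (w : Fin (T + 1) → W)
      (s : Fin (T + 1) → X × Z × Y) : Traj U X V W Z Y T :=
    ⟨u, fun i => (s i).1, v, w, fun i => (s i).2.1, fun i => (s i).2.2⟩
  have hsum (G : Traj U X V W Z Y T → R) :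
      ∑ τ, G τ = ∑ u, ∑ v, ∑ w, ∑ s, G (ofStates u v w s) := by
    rw [← (trajEquiv U X V W Z Y T).symm.sum_comp G]
    simp only [Fintype.sum_prod_type, sum_fun_prod]
    refine Finset.sum_congr rfl fun u _ => ?_
    rw [Finset.sum_comm]
    refine Finset.sum_congr rfl fun v _ => ?_
    rw [Finset.sum_comm]
    rfl
  have hdep {u v w} {G : Traj U X V W Z Y T → R} (hG : DependsOnHistory t G) :
      DependsOn (fun s => G (ofStates u v w s)) {i | i.val < t} := fun s s' hs =>
    hG rfl rfl rfl fun j hj => hs (idx T j) ((min_le_left j T).trans_lt hj)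
  rw [hsum, hsum]
  exact Finset.sum_congr rfl fun u _ => Finset.sum_congr rfl fun v _ => Finset.sum_congr rfl
    fun w _ => sum_tail_congr hT (fun g => hdep (hF g)) (fun g => hdep (hF' g)) fun s => h _

/-- The configuration observed along a trajectory. -/
def config (t k : ℕ) (τ : Traj U X V W Z Y T) : Config X V W Z Y t k :=
  (fun i => τ.v (idx T (t + i)), fun i => τ.w (idx T (t + i)), τ.z (idx T (t - 1)),
    fun j => τ.y (idx T j), fun j => τ.x (idx T j), fun j => τ.v (idx T j),
    fun j => τ.w (idx T j))

theorem config_eq_iff {t k : ℕ} {τ : Traj U X V W Z Y T} {hvk : Fin (k + 1) → V}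
    {hwk : Fin (k + 1) → W} {zt1 : Z} {hy : Fin t → Y} {hx : Fin t → X} {hv : Fin t → V}
    {hw : Fin t → W} :
    τ.config t k = (hvk, hwk, zt1, hy, hx, hv, hw) ↔
      (∀ i : Fin (k + 1), τ.v (idx T (t + i.val)) = hvk i) ∧
        (∀ i : Fin (k + 1), τ.w (idx T (t + i.val)) = hwk i) ∧
        τ.z (idx T (t - 1)) = zt1 ∧ histEv T t τ hy hx hv hw := by
  simp only [config, histEv, Prod.mk.injEq, funext_iff]

theorem dependsOnHistory_config {t : ℕ} (ht : 0 < t) (k : ℕ) :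
    DependsOnHistory t (config t k : Traj U X V W Z Y T → Config X V W Z Y t k) := by
  intro τ τ' _ hv hw hs
  simp only [state, Prod.mk.injEq] at hs
  simp only [config, hv, hw, (hs _ (Nat.sub_lt ht one_pos)).2.1, hs _ (Fin.is_lt _)]

end Traj

/-- The causal model G1, given by its factors. The factors `qx` may depend on time, so that
interventions on `x` lead from one model to another. -/
structure G1Model (U X V W Z Y : Type) where
  q1 : U → ℝ
  qu : U → U → ℝ
  qx : ℕ → X → U → ℝ
  qv : V → U → ℝ
  qw : W → U → ℝ
  a1 : Z → X → W → ℝ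
  b1 : Y → Z → X → V → ℝ
  a : ℕ → Z → X → W → Z → Y → ℝ
  b : ℕ → Y → Z → X → V → Y → ℝ

namespace G1Model

section Kernel

variable {U X V W Z Y : Type} {T : ℕ} (M : G1Model U X V W Z Y)

/-- The model under the intervention `do(x_j = xs j)`, `j ∈ J`. -/
def intervene [DecidableEq X] (J : Finset ℕ) (xs : ℕ → X) : G1Model U X V W Z Y :=
  { M with qx := fun j x u => if j ∈ J then (if x = xs j then 1 else 0) else M.qx j x u }

/-- The factors of a model are conditional probability mass functions up to time `T`. -/
structure IsStochastic [Fintype U] [Fintype X] [Fintype V] [Fintype W] [Fintype Z] [Fintype Y]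
    (M : G1Model U X V W Z Y) (T : ℕ) : Prop where
  q1 : M.q1 ∈ stdSimplex ℝ U
  qu : ∀ u, (M.qu · u) ∈ stdSimplex ℝ U
  qx : ∀ j u, (M.qx j · u) ∈ stdSimplex ℝ X
  qv : ∀ u, (M.qv · u) ∈ stdSimplex ℝ V
  qw : ∀ u, (M.qw · u) ∈ stdSimplex ℝ W
  a1 : ∀ x w, (M.a1 · x w) ∈ stdSimplex ℝ Z
  b1 : ∀ z x v, (M.b1 · z x v) ∈ stdSimplex ℝ Y
  a : ∀ j, 2 ≤ j → j ≤ T → ∀ x w z y, (M.a j · x w z y) ∈ stdSimplex ℝ Z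
  b : ∀ j, 2 ≤ j → j ≤ T → ∀ z x v y, (M.b j · z x v y) ∈ stdSimplex ℝ Y

/-- The transition weight from the state `s` at time `j - 1` to the state `s'` at time `j`, where
states are triples `(x, z, y)`, given the drivers `u`, `v`, `w` of the trajectory `τ`. -/
def kernel (τ : Traj U X V W Z Y T) (j : ℕ) (s' s : X × Z × Y) : ℝ :=
  M.qx j s'.1 (τ.u (idx T j)) *
    (M.a j s'.2.1 s'.1 (τ.w (idx T j)) s.2.1 s.2.2 *
      M.b j s'.2.2 s'.2.1 s'.1 (τ.v (idx T j)) s.2.2)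

/-- The conditional probability of `(y_{t+k}, z_{t+k}) = (yv, zv)` given `x_{t:t+k} = xs_{t:t+k}`
and the configuration, in terms of the factors of the model. -/
def blockKernel [Fintype Z] [Fintype Y] {t k : ℕ} (ht : 0 < t) (xs : ℕ → X) (yv : Y) (zv : Z) :
    Config X V W Z Y t k → ℝ
  | (hvk, hwk, zt1, hy, _) =>
    ∑ gy : Fin k → Y, ∑ gz : Fin k → Z, ∏ i : Fin (k + 1),
      (M.b (t + i.val) (extWith k gy yv i) (extWith k gz zv i) (xs (t + i.val)) (hvk i)
          (shiftFirst k (hy ⟨t - 1, Nat.sub_lt ht one_pos⟩) gy i) *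
        M.a (t + i.val) (extWith k gz zv i) (xs (t + i.val)) (hwk i) (shiftFirst k zt1 gz i)
          (shiftFirst k (hy ⟨t - 1, Nat.sub_lt ht one_pos⟩) gy i))

theorem dependsOnHistory_pathWeight {t n : ℕ} (ht : 0 < t) (g : Fin n → X × Z × Y) :
    Traj.DependsOnHistory t fun τ : Traj U X V W Z Y T =>
      pathWeight (M.kernel τ) t (τ.state (t - 1)) g := by
  intro τ τ' hu hv hw hs
  have hkernel : M.kernel τ = M.kernel τ' := by
    simp only [funext_iff, kernel, hu, hv, hw, implies_true]
  simp only [hkernel, hs (t - 1) (Nat.sub_lt ht one_pos)]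

variable {M}

theorem IsStochastic.intervene [Fintype U] [Fintype X] [Fintype V] [Fintype W] [Fintype Z]
    [Fintype Y] [DecidableEq X] (hM : M.IsStochastic T) (J : Finset ℕ) (xs : ℕ → X) :
    (M.intervene J xs).IsStochastic T where
  __ := hM
  qx j u := by
    by_cases hj : j ∈ J
    · simpa only [G1Model.intervene, hj, if_true, eq_comm] using ite_eq_mem_stdSimplex ℝ (xs j)
    · simpa only [G1Model.intervene, hj, if_false] using hM.qx j u

theorem IsStochastic.sum_kernel [Fintype U] [Fintype X] [Fintype V] [Fintype W] [Fintype Z]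
    [Fintype Y] (hM : M.IsStochastic T) (τ : Traj U X V W Z Y T) {j : ℕ} (hj : 2 ≤ j)
    (hjT : j ≤ T) (s : X × Z × Y) :
    ∑ s', M.kernel τ j s' s = 1 := by
  simp only [kernel, Fintype.sum_prod_type, ← Finset.mul_sum, (hM.a j hj hjT _ _ _ _).2,
    (hM.b j hj hjT _ _ _ _).2, (hM.qx j _).2, mul_one]

theorem IsStochastic.sum_pathWeight_kernel [Fintype U] [Fintype X] [Fintype V] [Fintype W]
    [Fintype Z] [Fintype Y] (hM : M.IsStochastic T) {t n : ℕ} (ht : 2 ≤ t) (hT : t + n = T)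
    (τ : Traj U X V W Z Y T) (s : X × Z × Y) :
    ∑ g : Fin (n + 1) → X × Z × Y, pathWeight (M.kernel τ) t s g = 1 :=
  sum_pathWeight (fun _ hj hj' => hM.sum_kernel τ (ht.trans hj) (by lia)) s

theorem sum_pathWeight_intervene_mul_ite [Fintype X] [Fintype Z] [Fintype Y]
    [DecidableEq X] [DecidableEq Z] [DecidableEq Y] {J : Finset ℕ} {t k : ℕ}
    (ht : 0 < t) (hJ : Finset.Icc t (t + k) ⊆ J) (xs : ℕ → X) (yv : Y) (zv : Z)
    (τ : Traj U X V W Z Y T) :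
    ∑ g : Fin (k + 1) → X × Z × Y,
        pathWeight ((M.intervene J xs).kernel τ) t (τ.state (t - 1)) g *
          (if (g (Fin.last k)).2 = (zv, yv) then 1 else 0) =
      M.blockKernel ht xs yv zv (τ.config t k) := by
  have hmem (i : Fin (k + 1)) : t + i ∈ J := hJ (Finset.mem_Icc.2 (by lia))
  calc
    _ = ∑ g : Fin (k + 1) → Z × Y,
          pathWeight (fun j s' s => M.a j s'.1 (xs j) (τ.w (idx T j)) s.1 s.2 *
              M.b j s'.2 s'.1 (xs j) (τ.v (idx T j)) s.2) t (τ.state (t - 1)).2 g *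
            (if g (Fin.last k) = (zv, yv) then 1 else 0) := by
      simp only [pathWeight, kernel, intervene, hmem, if_true, Finset.prod_mul_distrib, mul_assoc,
        sum_fun_prod_prod_ite_mul (fun i : Fin (k + 1) => xs (t + i)), map_cons_apply Prod.snd]
    _ = _ := by
      rw [sum_fin_succ_mul_ite_last, sum_fun_prod, Finset.sum_comm]
      simp only [pathWeight, blockKernel, Traj.config, Traj.state, cons_snoc_castSucc,
        map_cons_apply Prod.fst, map_cons_apply Prod.snd, map_snoc_apply Prod.fst,
        map_snoc_apply Prod.snd, extWith_eq_snoc, shiftFirst_eq_cons, mul_comm (M.b _ _ _ _ _ _)]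

theorem IsStochastic.sum_pathWeight_intervene_mul_ite [Fintype U] [Fintype X] [Fintype V]
    [Fintype W] [Fintype Z] [Fintype Y] [DecidableEq X] [DecidableEq Z] [DecidableEq Y]
    (hM : M.IsStochastic T) {t k n : ℕ} (ht : 2 ≤ t) (hkn : k ≤ n) (hT : t + n = T)
    {J : Finset ℕ} (hJ : Finset.Icc t (t + k) ⊆ J) (xs : ℕ → X) (yv : Y) (zv : Z)
    (τ : Traj U X V W Z Y T) :
    ∑ g : Fin (n + 1) → X × Z × Y,
        pathWeight ((M.intervene J xs).kernel τ) t (τ.state (t - 1)) g *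
          (if (g ⟨k, Nat.lt_succ_of_le hkn⟩).2 = (zv, yv) then 1 else 0) =
      M.blockKernel (two_pos.trans_le ht) xs yv zv (τ.config t k) := by
  rw [← G1Model.sum_pathWeight_intervene_mul_ite (two_pos.trans_le ht) hJ]
  exact sum_pathWeight_mul_take (Nat.succ_le_succ hkn)
    (fun _ hj hj' => (hM.intervene J xs).sum_kernel τ (ht.trans hj) (by lia)) _
    fun g => if (g (Fin.last k)).2 = (zv, yv) then 1 else 0

end Kernel

section Weight

variable {U X V W Z Y : Type} [DecidableEq U] [DecidableEq X] [DecidableEq V] [DecidableEq W]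
  [DecidableEq Z] [DecidableEq Y] [Inhabited U] [Inhabited X] [Inhabited V] [Inhabited W]
  [Inhabited Z] [Inhabited Y] {T : ℕ} (M : G1Model U X V W Z Y)

/-- The factors of a trajectory's probability that concern the drivers `u`, `v`, `w` at all times
and the states `(x, z, y)` before time `t`. For `t = T + 1` this is the joint probability mass
function of the model. -/
def weightBefore (t : ℕ) (τ : Traj U X V W Z Y T) : ℝ :=
  (if τ.u (idx T 0) = default ∧ τ.x (idx T 0) = default ∧ τ.v (idx T 0) = default ∧
      τ.w (idx T 0) = default ∧ τ.z (idx T 0) = default ∧ τ.y (idx T 0) = default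
    then 1 else 0) *
  (M.q1 (τ.u (idx T 1)) * ∏ j ∈ Finset.Icc 2 T, M.qu (τ.u (idx T j)) (τ.u (idx T (j - 1)))) *
  (∏ j ∈ Finset.Icc 1 T, M.qv (τ.v (idx T j)) (τ.u (idx T j)) *
    M.qw (τ.w (idx T j)) (τ.u (idx T j))) *
  (∏ j ∈ Finset.Ico 1 t, M.qx j (τ.x (idx T j)) (τ.u (idx T j))) *
  (M.a1 (τ.z (idx T 1)) (τ.x (idx T 1)) (τ.w (idx T 1)) *
    M.b1 (τ.y (idx T 1)) (τ.z (idx T 1)) (τ.x (idx T 1)) (τ.v (idx T 1)) *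
    ∏ j ∈ Finset.Ico 2 t,
      (M.a j (τ.z (idx T j)) (τ.x (idx T j)) (τ.w (idx T j)) (τ.z (idx T (j - 1)))
          (τ.y (idx T (j - 1))) *
        M.b j (τ.y (idx T j)) (τ.z (idx T j)) (τ.x (idx T j)) (τ.v (idx T j))
          (τ.y (idx T (j - 1)))))

theorem jointG1_eq_weightBefore (q1 : U → ℝ) (qu : U → U → ℝ) (qx : X → U → ℝ) (qv : V → U → ℝ)
    (qw : W → U → ℝ) (a1 : Z → X → W → ℝ) (b1 : Y → Z → X → V → ℝ)
    (a : ℕ → Z → X → W → Z → Y → ℝ) (b : ℕ → Y → Z → X → V → Y → ℝ) :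
    jointG1 T q1 qu qx qv qw a1 b1 a b =
      weightBefore ⟨q1, qu, fun _ => qx, qv, qw, a1, b1, a, b⟩ (T + 1) := by
  funext τ
  simp only [jointG1, weightBefore, Finset.Ico_add_one_right_eq_Icc, Finset.prod_mul_distrib]
  ring

theorem doxG1_eq_weightBefore (J : Finset ℕ) (xs : ℕ → X) (q1 : U → ℝ) (qu : U → U → ℝ)
    (qx : X → U → ℝ) (qv : V → U → ℝ) (qw : W → U → ℝ) (a1 : Z → X → W → ℝ)
    (b1 : Y → Z → X → V → ℝ) (a : ℕ → Z → X → W → Z → Y → ℝ)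
    (b : ℕ → Y → Z → X → V → Y → ℝ) :
    doxG1 T J xs q1 qu qx qv qw a1 b1 a b =
      (intervene ⟨q1, qu, fun _ => qx, qv, qw, a1, b1, a, b⟩ J xs).weightBefore (T + 1) := by
  funext τ
  simp only [doxG1, weightBefore, intervene, Finset.Ico_add_one_right_eq_Icc,
    Finset.prod_mul_distrib]
  ring

theorem dependsOnHistory_weightBefore {t : ℕ} (ht : 2 ≤ t) :
    Traj.DependsOnHistory t fun τ : Traj U X V W Z Y T => M.weightBefore t τ := by
  intro τ τ' hu hv hw hs
  simp only [Traj.state, Prod.mk.injEq] at hs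
  simp only [weightBefore, hu, hv, hw, hs 0 (by lia), hs 1 (by lia)]
  congr 2
  · refine Finset.prod_congr rfl fun j hj => ?_
    rw [(hs j (Finset.mem_Ico.1 hj).2).1]
  · refine Finset.prod_congr rfl fun j hj => ?_
    have hjt := (Finset.mem_Ico.1 hj).2
    simp only [hs j hjt, hs (j - 1) ((Nat.sub_le j 1).trans_lt hjt)]

variable {M}

theorem weightBefore_intervene {t : ℕ} {J : Finset ℕ} (hJ : ∀ j ∈ J, t ≤ j) (xs : ℕ → X)
    (τ : Traj U X V W Z Y T) :
    (M.intervene J xs).weightBefore t τ = M.weightBefore t τ := by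
  have hqx : ∏ j ∈ Finset.Ico 1 t, (M.intervene J xs).qx j (τ.x (idx T j)) (τ.u (idx T j)) =
      ∏ j ∈ Finset.Ico 1 t, M.qx j (τ.x (idx T j)) (τ.u (idx T j)) :=
    Finset.prod_congr rfl fun j hj =>
      if_neg fun hjJ => (hJ j hjJ).not_gt (Finset.mem_Ico.1 hj).2
  rw [weightBefore, hqx]
  rfl

theorem weightBefore_add {t : ℕ} (ht : 2 ≤ t) (n : ℕ) (τ : Traj U X V W Z Y T) :
    M.weightBefore (t + n) τ =
      M.weightBefore t τ *
        pathWeight (M.kernel τ) t (τ.state (t - 1)) (fun i : Fin n => τ.state (t + i)) := by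
  have hsplit (f : ℕ → ℝ) {m : ℕ} (hm : m ≤ t) : ∏ j ∈ Finset.Ico m (t + n), f j =
      (∏ j ∈ Finset.Ico m t, f j) * ∏ j ∈ Finset.Ico t (t + n), f j :=
    (Finset.prod_Ico_consecutive f hm (Nat.le_add_right t n)).symm
  rw [← prod_Ico_eq_pathWeight (M.kernel τ) t n τ.state, weightBefore, weightBefore,
    hsplit _ ht, hsplit _ (one_le_two.trans ht)]
  simp only [kernel, Traj.state, Finset.prod_mul_distrib]
  ring

theorem weightBefore_mul_ite {n : ℕ} {J : Finset ℕ} (hJ : J ⊆ Finset.Ico 1 n) (xs : ℕ → X)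
    (τ : Traj U X V W Z Y T) :
    M.weightBefore n τ * (if ∀ j ∈ J, τ.x (idx T j) = xs j then 1 else 0) =
      (∏ j ∈ J, M.qx j (xs j) (τ.u (idx T j))) * (M.intervene J xs).weightBefore n τ := by
  have hout : ∏ j ∈ Finset.Ico 1 n \ J, (M.intervene J xs).qx j (τ.x (idx T j)) (τ.u (idx T j)) =
      ∏ j ∈ Finset.Ico 1 n \ J, M.qx j (τ.x (idx T j)) (τ.u (idx T j)) :=
    Finset.prod_congr rfl fun j hj => if_neg (Finset.mem_sdiff.1 hj).2
  have hin : ∏ j ∈ J, (M.intervene J xs).qx j (τ.x (idx T j)) (τ.u (idx T j)) =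
      if ∀ j ∈ J, τ.x (idx T j) = xs j then 1 else 0 := by
    rw [← Finset.prod_const_one, ← Finset.prod_ite_zero]
    exact Finset.prod_congr rfl fun j hj => if_pos hj
  have hqx : (∏ j ∈ Finset.Ico 1 n, M.qx j (τ.x (idx T j)) (τ.u (idx T j))) *
        (if ∀ j ∈ J, τ.x (idx T j) = xs j then 1 else 0) =
      (∏ j ∈ J, M.qx j (xs j) (τ.u (idx T j))) *
        ∏ j ∈ Finset.Ico 1 n, (M.intervene J xs).qx j (τ.x (idx T j)) (τ.u (idx T j)) := by
    rw [← Finset.prod_sdiff hJ, ← Finset.prod_sdiff hJ, hout, hin]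
    split_ifs with h
    · have hxs : ∏ j ∈ J, M.qx j (τ.x (idx T j)) (τ.u (idx T j)) =
          ∏ j ∈ J, M.qx j (xs j) (τ.u (idx T j)) :=
        Finset.prod_congr rfl fun j hj => by rw [h j hj]
      rw [hxs, mul_one, mul_one, mul_comm]
    · simp only [mul_zero]
  have hmul (A B Q Q' I L : ℝ) (h : Q * I = L * Q') : A * Q * B * I = L * (A * Q' * B) := by
    linear_combination A * B * h
  exact hmul _ _ _ _ _ _ hqx

theorem IsStochastic.weightBefore_nonneg [Fintype U] [Fintype X] [Fintype V] [Fintype W] [Fintype Z]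
    [Fintype Y] (hM : M.IsStochastic T) {n : ℕ} (hn : n ≤ T + 1) (τ : Traj U X V W Z Y T) :
    0 ≤ M.weightBefore n τ := by
  have hu : 0 ≤ ∏ j ∈ Finset.Icc 2 T, M.qu (τ.u (idx T j)) (τ.u (idx T (j - 1))) :=
    Finset.prod_nonneg fun _ _ => (hM.qu _).1 _
  have hvw : 0 ≤ ∏ j ∈ Finset.Icc 1 T, M.qv (τ.v (idx T j)) (τ.u (idx T j)) *
      M.qw (τ.w (idx T j)) (τ.u (idx T j)) :=
    Finset.prod_nonneg fun _ _ => mul_nonneg ((hM.qv _).1 _) ((hM.qw _).1 _)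
  have hx : 0 ≤ ∏ j ∈ Finset.Ico 1 n, M.qx j (τ.x (idx T j)) (τ.u (idx T j)) :=
    Finset.prod_nonneg fun _ _ => (hM.qx _ _).1 _
  have hab (j : ℕ) (hj : j ∈ Finset.Ico 2 n) (x w z y z' y' v) :
      0 ≤ M.a j z' x w z y * M.b j y' z' x v y := by
    obtain ⟨hj2, hjn⟩ := Finset.mem_Ico.1 hj
    exact mul_nonneg ((hM.a j hj2 (by lia) _ _ _ _).1 _) ((hM.b j hj2 (by lia) _ _ _ _).1 _)
  exact mul_nonneg
    (mul_nonneg (mul_nonneg (mul_nonneg (by positivity) (mul_nonneg (hM.q1.1 _) hu)) hvw) hx)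
    (mul_nonneg (mul_nonneg ((hM.a1 _ _).1 _) ((hM.b1 _ _ _).1 _))
      (Finset.prod_nonneg fun j hj => hab j hj _ _ _ _ _ _ _))

end Weight

section Identification

variable {U X V W Z Y : Type}
  [Fintype U] [Fintype X] [Fintype V] [Fintype W] [Fintype Z] [Fintype Y]
  [DecidableEq U] [DecidableEq X] [DecidableEq V] [DecidableEq W] [DecidableEq Z] [DecidableEq Y]
  [Inhabited U] [Inhabited X] [Inhabited V] [Inhabited W] [Inhabited Z] [Inhabited Y]
  {M : G1Model U X V W Z Y} {T t k : ℕ}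

theorem sum_intervene_mul_of_dependsOnHistory (hM : M.IsStochastic T) (ht : 2 ≤ t) (htT : t ≤ T)
    {J : Finset ℕ} (hJ : ∀ j ∈ J, t ≤ j) (xs : ℕ → X) {f : Traj U X V W Z Y T → ℝ}
    (hf : Traj.DependsOnHistory t f) :
    ∑ τ, (M.intervene J xs).weightBefore (T + 1) τ * f τ =
      ∑ τ, M.weightBefore (T + 1) τ * f τ := by
  obtain ⟨n, rfl⟩ := Nat.exists_eq_add_of_le htT
  have hdep (M' : G1Model U X V W Z Y) (g : Fin (n + 1) → X × Z × Y) :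
      Traj.DependsOnHistory t fun τ : Traj U X V W Z Y (t + n) =>
        M'.weightBefore t τ * pathWeight (M'.kernel τ) t (τ.state (t - 1)) g * f τ :=
    ((M'.dependsOnHistory_weightBefore ht).mul
      (M'.dependsOnHistory_pathWeight (by lia) g)).mul hf
  simp only [Nat.add_assoc, weightBefore_add ht]
  refine Traj.sum_congr_of_dependsOnHistory rfl (hdep _) (hdep _) fun τ => ?_
  simp only [← Finset.sum_mul, ← Finset.mul_sum, weightBefore_intervene hJ,
    hM.sum_pathWeight_kernel ht rfl, (hM.intervene J xs).sum_pathWeight_kernel ht rfl]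

theorem sum_intervene_ite_mul_of_dependsOnHistory (hM : M.IsStochastic T) (ht : 2 ≤ t)
    (htkT : t + k ≤ T) {J : Finset ℕ} (hJ : Finset.Icc t (t + k) ⊆ J) (xs : ℕ → X) (yv : Y) (zv : Z)
    {f : Traj U X V W Z Y T → ℝ} (hf : Traj.DependsOnHistory t f) :
    ∑ τ, (M.intervene J xs).weightBefore (T + 1) τ *
        ((if (τ.state (t + k)).2 = (zv, yv) then 1 else 0) * f τ) =
      ∑ τ, (M.intervene J xs).weightBefore (T + 1) τ *
        (M.blockKernel (two_pos.trans_le ht) xs yv zv (τ.config t k) * f τ) := by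
  obtain ⟨n, rfl⟩ := Nat.exists_eq_add_of_le ((Nat.le_add_right t k).trans htkT)
  have hkn : k ≤ n := Nat.le_of_add_le_add_left htkT
  have ht0 : 0 < t := two_pos.trans_le ht
  set N := M.intervene J xs
  have hN : N.IsStochastic (t + n) := hM.intervene J xs
  have hdep (g : Fin (n + 1) → X × Z × Y) :=
    (N.dependsOnHistory_weightBefore (T := t + n) ht).mul (N.dependsOnHistory_pathWeight ht0 g)
  have hκ := (Traj.dependsOnHistory_config (U := U) (T := t + n) ht0 k).comp
    (M.blockKernel ht0 xs yv zv)
  simp only [Nat.add_assoc, weightBefore_add ht]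
  refine Traj.sum_congr_of_dependsOnHistory rfl
    (F := fun τ g => N.weightBefore t τ * pathWeight (N.kernel τ) t (τ.state (t - 1)) g *
      ((if (g ⟨k, Nat.lt_succ_of_le hkn⟩).2 = (zv, yv) then 1 else 0) * f τ))
    (fun g => (hdep g).mul (hf.comp _)) (fun g => (hdep g).mul (hκ.mul hf)) fun τ => ?_
  have hblock := hM.sum_pathWeight_intervene_mul_ite ht hkn rfl hJ xs yv zv τ
  have hone := hN.sum_pathWeight_kernel ht rfl τ (τ.state (t - 1))
  calc
    _ = N.weightBefore t τ * f τ *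
          ∑ g : Fin (n + 1) → X × Z × Y, pathWeight (N.kernel τ) t (τ.state (t - 1)) g *
            (if (g ⟨k, Nat.lt_succ_of_le hkn⟩).2 = (zv, yv) then 1 else 0) := by
      rw [Finset.mul_sum]
      exact Finset.sum_congr rfl fun g _ => by ring
    _ = N.weightBefore t τ * f τ * M.blockKernel ht0 xs yv zv (τ.config t k) *
          ∑ g : Fin (n + 1) → X × Z × Y, pathWeight (N.kernel τ) t (τ.state (t - 1)) g := by
      rw [hblock, hone, mul_one]
    _ = _ := by
      rw [Finset.mul_sum]
      exact Finset.sum_congr rfl fun g _ => by ring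

theorem pr_intervene_eq_sum_config (hM : M.IsStochastic T) (ht : 2 ≤ t) (htkT : t + k ≤ T)
    (xs : ℕ → X) (yv : Y) (zv : Z) :
    pr ((M.intervene (Finset.Icc t (t + k)) xs).weightBefore (T + 1))
        (fun τ => τ.y (idx T (t + k)) = yv ∧ τ.z (idx T (t + k)) = zv) =
      ∑ c, M.blockKernel (two_pos.trans_le ht) xs yv zv c *
        pr (M.weightBefore (T + 1)) (fun τ : Traj U X V W Z Y T => τ.config t k = c) := by
  have hκ := (Traj.dependsOnHistory_config (U := U) (T := T) (two_pos.trans_le ht) k).comp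
    (M.blockKernel (two_pos.trans_le ht) xs yv zv)
  have hblock := sum_intervene_ite_mul_of_dependsOnHistory hM ht htkT subset_rfl xs yv zv
    (f := fun _ => 1) fun _ _ _ _ _ _ => rfl
  simp only [mul_one] at hblock
  rw [sum_mul_pr_eq, ← sum_intervene_mul_of_dependsOnHistory hM ht (by lia)
    (fun j hj => (Finset.mem_Icc.1 hj).1) xs hκ, ← hblock, pr_eq_sum_mul_ite]
  simp only [Traj.state, Prod.mk.injEq, and_comm]

theorem sum_treated_ite_mul_of_dependsOnHistory (hM : M.IsStochastic T) (ht : 2 ≤ t)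
    (htkT : t + k ≤ T) (xs : ℕ → X) (yv : Y) (zv : Z) {f : Traj U X V W Z Y T → ℝ}
    (hf : Traj.DependsOnHistory t f) :
    ∑ τ, M.weightBefore (T + 1) τ *
          (if ∀ j ∈ Finset.Icc t (t + k), τ.x (idx T j) = xs j then 1 else 0) *
        ((if (τ.state (t + k)).2 = (zv, yv) then 1 else 0) * f τ) =
      ∑ τ, M.weightBefore (T + 1) τ *
          (if ∀ j ∈ Finset.Icc t (t + k), τ.x (idx T j) = xs j then 1 else 0) *
        (M.blockKernel (two_pos.trans_le ht) xs yv zv (τ.config t k) * f τ) := by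
  have hJ : Finset.Icc t (t + k) ⊆ Finset.Ico 1 (T + 1) := fun j hj => by
    rw [Finset.mem_Icc] at hj
    exact Finset.mem_Ico.2 (by lia)
  let ratio (τ : Traj U X V W Z Y T) : ℝ :=
    ∏ j ∈ Finset.Icc t (t + k), M.qx j (xs j) (τ.u (idx T j))
  have hratio : Traj.DependsOnHistory t ratio := fun τ τ' hu _ _ _ => by simp only [ratio, hu]
  have hchange (φ : Traj U X V W Z Y T → ℝ) :
      ∑ τ, M.weightBefore (T + 1) τ *
            (if ∀ j ∈ Finset.Icc t (t + k), τ.x (idx T j) = xs j then 1 else 0) *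
          (φ τ * f τ) =
        ∑ τ, (M.intervene (Finset.Icc t (t + k)) xs).weightBefore (T + 1) τ *
          (φ τ * (ratio τ * f τ)) :=
    Finset.sum_congr rfl fun τ _ => by rw [weightBefore_mul_ite hJ]; ring
  rw [hchange, hchange]
  exact sum_intervene_ite_mul_of_dependsOnHistory hM ht htkT subset_rfl xs yv zv (hratio.mul hf)

theorem pr_outcome_and_eq_blockKernel_mul (hM : M.IsStochastic T) (ht : 2 ≤ t) (htkT : t + k ≤ T)
    (xs : ℕ → X) (yv : Y) (zv : Z) (c : Config X V W Z Y t k) :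
    pr (M.weightBefore (T + 1)) (fun τ =>
        (τ.y (idx T (t + k)) = yv ∧ τ.z (idx T (t + k)) = zv) ∧
          (∀ j, t ≤ j → j ≤ t + k → τ.x (idx T j) = xs j) ∧ τ.config t k = c) =
      M.blockKernel (two_pos.trans_le ht) xs yv zv c *
        pr (M.weightBefore (T + 1)) (fun τ =>
          (∀ j, t ≤ j → j ≤ t + k → τ.x (idx T j) = xs j) ∧ τ.config t k = c) := by
  classical
  have hdep : Traj.DependsOnHistory t fun τ : Traj U X V W Z Y T =>
      if τ.config t k = c then (1 : ℝ) else 0 :=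
    (Traj.dependsOnHistory_config (two_pos.trans_le ht) k).comp fun c' => if c' = c then 1 else 0
  have hκ (τ : Traj U X V W Z Y T) :
      M.blockKernel (two_pos.trans_le ht) xs yv zv (τ.config t k) *
          (if τ.config t k = c then 1 else 0) =
        M.blockKernel (two_pos.trans_le ht) xs yv zv c * (if τ.config t k = c then 1 else 0) := by
    split_ifs with h
    · rw [h]
    · simp only [mul_zero]
  have htreated (τ : Traj U X V W Z Y T) :
      (∀ j, t ≤ j → j ≤ t + k → τ.x (idx T j) = xs j) ↔
        ∀ j ∈ Finset.Icc t (t + k), τ.x (idx T j) = xs j := by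
    simp only [Finset.mem_Icc, and_imp]
  calc
    _ = ∑ τ, M.weightBefore (T + 1) τ *
            (if ∀ j ∈ Finset.Icc t (t + k), τ.x (idx T j) = xs j then 1 else 0) *
          ((if (τ.state (t + k)).2 = (zv, yv) then 1 else 0) *
            (if τ.config t k = c then 1 else 0)) := by
      rw [pr_eq_sum_mul_ite]
      refine Finset.sum_congr rfl fun τ _ => ?_
      simp only [htreated, Traj.state, Prod.mk.injEq, and_comm (a := τ.y _ = _), ite_and, mul_ite,
        mul_one, mul_zero]
      split_ifs <;> simp
    _ = ∑ τ, M.weightBefore (T + 1) τ *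
            (if ∀ j ∈ Finset.Icc t (t + k), τ.x (idx T j) = xs j then 1 else 0) *
          (M.blockKernel (two_pos.trans_le ht) xs yv zv c *
            (if τ.config t k = c then 1 else 0)) := by
      rw [sum_treated_ite_mul_of_dependsOnHistory hM ht htkT xs yv zv hdep]
      simp only [hκ]
    _ = _ := by
      simp only [pr_eq_sum_mul_ite, Finset.mul_sum, htreated, ite_and, mul_ite, mul_one, mul_zero]
      refine Finset.sum_congr rfl fun τ _ => ?_
      split_ifs <;> simp [mul_comm]

end Identification

end G1Model

/-- Long-term causal effects of recurring interventions do(x_{t:t+k}),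
graph G1: with C = (v_{t:t+k}, w_{t:t+k}, z_{t-1}, S_{t-1}) and assuming
P(x_{t:t+k} = x*_{t:t+k}, c) > 0 whenever P(c) > 0, for every pair of values (y, z):
P(y_{t+k} = y, z_{t+k} = z | do(x_{t:t+k} = x*_{t:t+k}))
  = Σ_c P(y_{t+k} = y, z_{t+k} = z | x_{t:t+k} = x*_{t:t+k}, c) P(c)
  = Σ_c [Σ_{y_{t:t+k-1}, z_{t:t+k-1}} ∏_{j=t}^{t+k} b(y_j) a(z_j)] P(c),
with y_{t+k} = y and z_{t+k} = z held fixed in the inner sum. -/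
theorem statement_2 {U X V W Z Y : Type}
    [Fintype U] [Fintype X] [Fintype V] [Fintype W] [Fintype Z] [Fintype Y]
    [DecidableEq U] [DecidableEq X] [DecidableEq V] [DecidableEq W] [DecidableEq Z]
    [DecidableEq Y]
    [Inhabited U] [Inhabited X] [Inhabited V] [Inhabited W] [Inhabited Z] [Inhabited Y]
    (T t k : ℕ) (ht2 : 2 ≤ t) (htkT : t + k ≤ T) (xstar : ℕ → X)
    (q1 : U → ℝ) (qu : U → U → ℝ) (qx : X → U → ℝ) (qv : V → U → ℝ) (qw : W → U → ℝ)
    (a1 : Z → X → W → ℝ) (b1 : Y → Z → X → V → ℝ)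
    (a : ℕ → Z → X → W → Z → Y → ℝ) (b : ℕ → Y → Z → X → V → Y → ℝ)
    (hq1 : (∀ u', 0 ≤ q1 u') ∧ (∑ u', q1 u') = 1)
    (hqu : ∀ u0, (∀ u', 0 ≤ qu u' u0) ∧ (∑ u', qu u' u0) = 1)
    (hqx : ∀ u0, (∀ x', 0 ≤ qx x' u0) ∧ (∑ x', qx x' u0) = 1)
    (hqv : ∀ u0, (∀ v', 0 ≤ qv v' u0) ∧ (∑ v', qv v' u0) = 1)
    (hqw : ∀ u0, (∀ w', 0 ≤ qw w' u0) ∧ (∑ w', qw w' u0) = 1)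
    (ha1 : ∀ x0 w0, (∀ z', 0 ≤ a1 z' x0 w0) ∧ (∑ z', a1 z' x0 w0) = 1)
    (hb1 : ∀ z0 x0 v0, (∀ y', 0 ≤ b1 y' z0 x0 v0) ∧ (∑ y', b1 y' z0 x0 v0) = 1)
    (ha : ∀ j, 2 ≤ j → j ≤ T → ∀ x0 w0 z0 y0,
      (∀ z', 0 ≤ a j z' x0 w0 z0 y0) ∧ (∑ z', a j z' x0 w0 z0 y0) = 1)
    (hb : ∀ j, 2 ≤ j → j ≤ T → ∀ z0 x0 v0 y0,
      (∀ y', 0 ≤ b j y' z0 x0 v0 y0) ∧ (∑ y', b j y' z0 x0 v0 y0) = 1)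
    (hpos : ∀ (hvk : Fin (k + 1) → V) (hwk : Fin (k + 1) → W) (zt1 : Z)
        (hy : Fin t → Y) (hx : Fin t → X) (hv : Fin t → V) (hw : Fin t → W),
      0 < pr (jointG1 T q1 qu qx qv qw a1 b1 a b)
          (fun τ => (∀ i : Fin (k + 1), τ.v (idx T (t + i.val)) = hvk i) ∧
            (∀ i : Fin (k + 1), τ.w (idx T (t + i.val)) = hwk i) ∧
            τ.z (idx T (t - 1)) = zt1 ∧ histEv T t τ hy hx hv hw) →
      0 < pr (jointG1 T q1 qu qx qv qw a1 b1 a b)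
          (fun τ => (∀ j, t ≤ j → j ≤ t + k → τ.x (idx T j) = xstar j) ∧
            (∀ i : Fin (k + 1), τ.v (idx T (t + i.val)) = hvk i) ∧
            (∀ i : Fin (k + 1), τ.w (idx T (t + i.val)) = hwk i) ∧
            τ.z (idx T (t - 1)) = zt1 ∧ histEv T t τ hy hx hv hw)) :
    ∀ (yv : Y) (zv : Z),
      (pr (doxG1 T (Finset.Icc t (t + k)) xstar q1 qu qx qv qw a1 b1 a b)
          (fun τ => τ.y (idx T (t + k)) = yv ∧ τ.z (idx T (t + k)) = zv) =
        ∑ hvk : Fin (k + 1) → V, ∑ hwk : Fin (k + 1) → W, ∑ zt1 : Z,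
          ∑ hy : Fin t → Y, ∑ hx : Fin t → X, ∑ hv : Fin t → V, ∑ hw : Fin t → W,
          cpr (jointG1 T q1 qu qx qv qw a1 b1 a b)
            (fun τ => τ.y (idx T (t + k)) = yv ∧ τ.z (idx T (t + k)) = zv)
            (fun τ => (∀ j, t ≤ j → j ≤ t + k → τ.x (idx T j) = xstar j) ∧
              (∀ i : Fin (k + 1), τ.v (idx T (t + i.val)) = hvk i) ∧
              (∀ i : Fin (k + 1), τ.w (idx T (t + i.val)) = hwk i) ∧
              τ.z (idx T (t - 1)) = zt1 ∧ histEv T t τ hy hx hv hw) *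
          pr (jointG1 T q1 qu qx qv qw a1 b1 a b)
            (fun τ => (∀ i : Fin (k + 1), τ.v (idx T (t + i.val)) = hvk i) ∧
              (∀ i : Fin (k + 1), τ.w (idx T (t + i.val)) = hwk i) ∧
              τ.z (idx T (t - 1)) = zt1 ∧ histEv T t τ hy hx hv hw)) ∧
      (pr (doxG1 T (Finset.Icc t (t + k)) xstar q1 qu qx qv qw a1 b1 a b)
          (fun τ => τ.y (idx T (t + k)) = yv ∧ τ.z (idx T (t + k)) = zv) =
        ∑ hvk : Fin (k + 1) → V, ∑ hwk : Fin (k + 1) → W, ∑ zt1 : Z,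
          ∑ hy : Fin t → Y, ∑ hx : Fin t → X, ∑ hv : Fin t → V, ∑ hw : Fin t → W,
          (∑ gy : Fin k → Y, ∑ gz : Fin k → Z,
            ∏ i : Fin (k + 1),
              (b (t + i.val) (extWith k gy yv i) (extWith k gz zv i) (xstar (t + i.val))
                  (hvk i) (shiftFirst k (hy ⟨t - 1, by omega⟩) gy i) *
                a (t + i.val) (extWith k gz zv i) (xstar (t + i.val)) (hwk i)
                  (shiftFirst k zt1 gz i) (shiftFirst k (hy ⟨t - 1, by omega⟩) gy i))) *
          pr (jointG1 T q1 qu qx qv qw a1 b1 a b)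
            (fun τ => (∀ i : Fin (k + 1), τ.v (idx T (t + i.val)) = hvk i) ∧
              (∀ i : Fin (k + 1), τ.w (idx T (t + i.val)) = hwk i) ∧
              τ.z (idx T (t - 1)) = zt1 ∧ histEv T t τ hy hx hv hw)) := by
  intro yv zv
  let M : G1Model U X V W Z Y := ⟨q1, qu, fun _ => qx, qv, qw, a1, b1, a, b⟩
  have hM : M.IsStochastic T := ⟨hq1, hqu, fun _ => hqx, hqv, hqw, ha1, hb1, ha, hb⟩
  have hblock := G1Model.pr_intervene_eq_sum_config hM ht2 htkT xstar yv zv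
  have hcond := G1Model.pr_outcome_and_eq_blockKernel_mul hM ht2 htkT xstar yv zv
  simp only [Fintype.sum_prod_type, Prod.forall, Traj.config_eq_iff] at hblock hcond
  simp only [G1Model.doxG1_eq_weightBefore, G1Model.jointG1_eq_weightBefore] at hpos ⊢
  refine ⟨hblock.trans ?_, hblock⟩
  iterate 7 refine Finset.sum_congr rfl fun _ _ => ?_
  exact (cpr_mul_pr_of_pr_and_eq (hM.weightBefore_nonneg le_rfl)
    (hcond _ _ _ _ _ _ _) (hpos _ _ _ _ _ _ _)).symm
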